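/- Probabilistic simulation is a precongruence for sequential composition: for probabilistic automata P, Q, R with disjoint state spaces, if P ≤ Q then P · R ≤ Q · R and R · P ≤ R · Q. -/

import Mathlib

open scoped ENNReal

namespace PCKA

/-- A probabilistic automaton over the (non-silent) action alphabet `α`, with state
space `σ`.  Transition labels are `Option α`, where `none` plays the role of the
silent action `τ`; `trans x a μ` means `x —a→ μ` where `μ` is a (countably
supported) probability distribution over states, `init` is the initial
distribution and `final` the set of final states. -/
structure PAut (α : Type) (σ : Type) where
  trans : σ → Option α → PMF σ → Prop
  init : PMF σ
  final : Set σ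

/-- The lifting `S̄ ⊆ D(X) × D(Y)` of a relation `S ⊆ X × D(Y)`: `μ S̄ ν` iff there
are weights `p n` summing to `1`, states `x n` and distributions `νs n` with
`μ = Σ_n p n · δ_{x n}`, `x n S νs n` for each `n`, and `ν = Σ_n p n · νs n`. -/
def Lift {X Y : Type} (S : X → PMF Y → Prop) (μ : PMF X) (ν : PMF Y) : Prop :=
  ∃ (p : ℕ → ℝ≥0∞) (x : ℕ → X) (νs : ℕ → PMF Y),
    (∑' n, p n) = 1 ∧
    (∀ s, μ s = ∑' n, p n * (PMF.pure (x n)) s) ∧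
    (∀ n, S (x n) (νs n)) ∧
    (∀ t, ν t = ∑' n, p n * (νs n) t)

/-- The double lifting `T̿ ⊆ D(X) × D(Z)` of a relation `T ⊆ X × Z`, via a weight
function `w`. -/
def DLift {X Z : Type} (T : X → Z → Prop) (μ : PMF X) (ψ : PMF Z) : Prop :=
  ∃ w : X → Z → ℝ≥0∞,
    (∀ x z, 0 < w x z → T x z) ∧
    (∀ x, (∑' z, w x z) = μ x) ∧
    (∀ z, (∑' x, w x z) = ψ z)

/-- Flattening `π : D(D(Y)) → D(Y)`, `π(ψ) = Σ_{ν} ψ(ν)·ν`. -/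
noncomputable def flat {Y : Type} (ψ : PMF (PMF Y)) : PMF Y := ψ.bind id

/-- Single transition step, with the τ-transitions extended by reflexivity
(`x —τ→ δ_x` is always allowed). -/
def step {α σ : Type} (P : PAut α σ) (a : Option α) (x : σ) (μ : PMF σ) : Prop :=
  P.trans x a μ ∨ (a = none ∧ μ = PMF.pure x)

/-- Weak internal moves `⇒`: the reflexive-transitive closure of the lifted
(extended) τ-transition relation on distributions. -/
def WeakTau {α σ : Type} (P : PAut α σ) : PMF σ → PMF σ → Prop :=
  Relation.ReflTransGen (Lift (step P none))

/-- Weak `a`-transition `μ ⇒^a μ'`: `μ ⇒ μ₁ —ā→ μ₂ ⇒ μ'`. -/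
def WeakStep {α σ : Type} (P : PAut α σ) (a : Option α) (μ μ' : PMF σ) : Prop :=
  ∃ μ₁ μ₂, WeakTau P μ μ₁ ∧ Lift (step P a) μ₁ μ₂ ∧ WeakTau P μ₂ μ'

/-- A probabilistic simulation from `P` to `Q` (Deng et al. style). -/
structure IsSimulation {α σ τ' : Type} (P : PAut α σ) (Q : PAut α τ')
    (S : σ → PMF τ' → Prop) : Prop where
  init : ∃ ν₀', WeakTau Q Q.init ν₀' ∧ Lift S P.init ν₀'
  step : ∀ x a μ', P.trans x a μ' → ∀ ν, S x ν →
    ∃ ν', WeakStep Q a ν ν' ∧ Lift S μ' ν'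
  final : ∀ x ν, x ∈ P.final → S x ν →
    ∃ ν', WeakTau Q ν ν' ∧ ∀ y ∈ ν'.support, y ∈ Q.final

/-- A probabilistic weak forward simulation from `P` to `Q` (Segala style). -/
structure IsWFSimulation {α σ τ' : Type} (P : PAut α σ) (Q : PAut α τ')
    (S : σ → PMF τ' → Prop) : Prop where
  init : ∃ ψ₀ : PMF (PMF τ'), DLift S P.init ψ₀ ∧ WeakTau Q Q.init (flat ψ₀)
  step : ∀ x a μ', P.trans x a μ' → ∀ ν, S x ν →
    ∃ ψ : PMF (PMF τ'), WeakStep Q a ν (flat ψ) ∧ DLift S μ' ψ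
  final : ∀ x ν, x ∈ P.final → S x ν →
    ∃ ψ : PMF (PMF τ'), (∀ ρ ∈ ψ.support, ∀ y ∈ ρ.support, y ∈ Q.final) ∧
      WeakTau Q ν (flat ψ)

/-- `P ≤ Q`: there exists a probabilistic simulation from `P` to `Q`. -/
def Sim {α σ τ' : Type} (P : PAut α σ) (Q : PAut α τ') : Prop :=
  ∃ S, IsSimulation P Q S

/-- Simulation equivalence `P ≡ Q`. -/
def SimEquiv {α σ τ' : Type} (P : PAut α σ) (Q : PAut α τ') : Prop :=
  Sim P Q ∧ Sim Q P

/-- Convex combination `p·μ + (1−p)·ν` of two distributions. -/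
noncomputable def mix {X : Type} (p : ℝ≥0∞) (hp : p ≤ 1) (μ ν : PMF X) : PMF X :=
  ⟨fun x => p * μ x + (1 - p) * ν x, by
    refine ENNReal.summable.hasSum_iff.mpr ?_
    rw [ENNReal.tsum_add, ENNReal.tsum_mul_left, ENNReal.tsum_mul_left,
      μ.tsum_coe, ν.tsum_coe, mul_one, mul_one, add_tsub_cancel_of_le hp]⟩

/-- Product distribution `μ × ν`, with `(μ × ν)(x,y) = μ(x)·ν(y)`. -/
noncomputable def pprod {X Y : Type} (μ : PMF X) (ν : PMF Y) : PMF (X × Y) :=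
  μ.bind fun x => ν.map fun y => (x, y)

/-- The skip automaton `1`: one state, no transitions, that state is final. -/
noncomputable def skip (α : Type) : PAut α Unit :=
  ⟨fun _ _ _ => False, PMF.pure (), Set.univ⟩

/-- The deadlock automaton `0`: one state, no transitions, no final state. -/
noncomputable def deadlock (α : Type) : PAut α Unit :=
  ⟨fun _ _ _ => False, PMF.pure (), ∅⟩

/-- Nondeterministic choice `P + Q`: disjoint union of the two automata (realised
by the sum type) plus a fresh initial state `z = none` with `z —τ→ μ₀` and
`z —τ→ ν₀`. -/
noncomputable def nchoice {α σ τ' : Type} (P : PAut α σ) (Q : PAut α τ') :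
    PAut α (Option (σ ⊕ τ')) where
  trans := fun s a μ =>
    match s with
    | none => a = none ∧
        (μ = P.init.map (fun x => some (Sum.inl x)) ∨
         μ = Q.init.map (fun y => some (Sum.inr y)))
    | some (Sum.inl x) => ∃ μ', P.trans x a μ' ∧ μ = μ'.map (fun x => some (Sum.inl x))
    | some (Sum.inr y) => ∃ ν', Q.trans y a ν' ∧ μ = ν'.map (fun y => some (Sum.inr y))
  init := PMF.pure none
  final := {s | (∃ x ∈ P.final, s = some (Sum.inl x)) ∨ (∃ y ∈ Q.final, s = some (Sum.inr y))}

/-- Sequential composition `P · Q`: disjoint union (realised by the sum type),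
with a τ-transition from each final state of `P` to the initial distribution of
`Q`; initial distribution that of `P`, final states those of `Q`. -/
noncomputable def pseq {α σ τ' : Type} (P : PAut α σ) (Q : PAut α τ') :
    PAut α (σ ⊕ τ') where
  trans := fun s a μ =>
    match s with
    | Sum.inl x =>
        (∃ μ', P.trans x a μ' ∧ μ = μ'.map Sum.inl) ∨
        (a = none ∧ x ∈ P.final ∧ μ = Q.init.map Sum.inr)
    | Sum.inr y => ∃ ν', Q.trans y a ν' ∧ μ = ν'.map Sum.inr
  init := P.init.map Sum.inl
  final := {s | ∃ y ∈ Q.final, s = Sum.inr y}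

/-- Kleene star `P*`: a fresh state `z = none` which is initial and the only
final state, with `z —τ→ μ₀` and `x —τ→ δ_z` for each final state `x` of `P`. -/
noncomputable def pstar {α σ : Type} (P : PAut α σ) : PAut α (Option σ) where
  trans := fun s a μ =>
    match s with
    | none => a = none ∧ μ = P.init.map some
    | some x =>
        (∃ μ', P.trans x a μ' ∧ μ = μ'.map some) ∨
        (a = none ∧ x ∈ P.final ∧ μ = PMF.pure none)
  init := PMF.pure none
  final := {none}

/-- Probabilistic choice `P ⊕_p Q`: disjoint union with initial distribution
`p·μ₀ + (1−p)·ν₀`. -/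
noncomputable def pchoice {α σ τ' : Type} (p : ℝ≥0∞) (hp : p ≤ 1)
    (P : PAut α σ) (Q : PAut α τ') : PAut α (σ ⊕ τ') where
  trans := fun s a μ =>
    match s with
    | Sum.inl x => ∃ μ', P.trans x a μ' ∧ μ = μ'.map Sum.inl
    | Sum.inr y => ∃ ν', Q.trans y a ν' ∧ μ = ν'.map Sum.inr
  init := mix p hp (P.init.map Sum.inl) (Q.init.map Sum.inr)
  final := {s | (∃ x ∈ P.final, s = Sum.inl x) ∨ (∃ y ∈ Q.final, s = Sum.inr y)}

/-- CSP-style parallel composition `P ∥_A Q` synchronising on the frame `A`: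
actions in `A` must be performed jointly, all other actions (including τ) are
interleaved. -/
noncomputable def par {α σ τ' : Type} (A : Set α) (P : PAut α σ) (Q : PAut α τ') :
    PAut α (σ × τ') where
  trans := fun s a μπ => ∃ μ ν, μπ = pprod μ ν ∧
    ((∃ b ∈ A, a = some b ∧ P.trans s.1 a μ ∧ Q.trans s.2 a ν) ∨
     ((∀ b ∈ A, a ≠ some b) ∧ P.trans s.1 a μ ∧ ν = PMF.pure s.2) ∨
     ((∀ b ∈ A, a ≠ some b) ∧ Q.trans s.2 a ν ∧ μ = PMF.pure s.1))
  init := pprod P.init Q.init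
  final := {s | s.1 ∈ P.final ∧ s.2 ∈ Q.final}

theorem bind_congr_support {X Y : Type} (μ : PMF X) (f g : X → PMF Y)
    (h : ∀ x ∈ μ.support, f x = g x) : μ.bind f = μ.bind g := by
  ext y
  rw [PMF.bind_apply, PMF.bind_apply]
  refine tsum_congr fun x => ?_
  by_cases hx : μ x = 0
  · simp [hx]
  · rw [h x ((PMF.mem_support_iff _ _).2 hx)]

theorem lift_iff {X Y : Type} (S : X → PMF Y → Prop) (μ : PMF X) (ν : PMF Y) :
    Lift S μ ν ↔ ∃ (ψ : PMF ℕ) (x : ℕ → X) (νs : ℕ → PMF Y),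
      μ = ψ.bind (fun n => PMF.pure (x n)) ∧ (∀ n, S (x n) (νs n)) ∧ ν = ψ.bind νs := by
  constructor
  · rintro ⟨p, x, νs, hp, hμ, hS, hν⟩
    obtain ⟨ψ, hψ⟩ : ∃ ψ : PMF ℕ, ∀ n, ψ n = p n :=
      ⟨⟨p, ENNReal.summable.hasSum_iff.mpr hp⟩, fun _ => rfl⟩
    refine ⟨ψ, x, νs, ?_, hS, ?_⟩
    · ext s
      simp only [hμ, PMF.bind_apply, hψ]
    · ext s
      simp only [hν, PMF.bind_apply, hψ]
  · rintro ⟨ψ, x, νs, rfl, hS, rfl⟩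
    exact ⟨ψ, x, νs, ψ.tsum_coe, fun s => PMF.bind_apply _ _ _, hS,
      fun t => PMF.bind_apply _ _ _⟩

theorem lift_map {X Y X' Y' : Type} {S : X → PMF Y → Prop} {S' : X' → PMF Y' → Prop}
    {μ : PMF X} {ν : PMF Y} (f : X → X') (g : Y → Y')
    (h : ∀ x ν, S x ν → S' (f x) (ν.map g)) (hl : Lift S μ ν) :
    Lift S' (μ.map f) (ν.map g) := by
  rw [lift_iff] at hl ⊢
  obtain ⟨ψ, x, νs, rfl, hS, rfl⟩ := hl
  refine ⟨ψ, fun n => f (x n), fun n => (νs n).map g, ?_, fun n => h _ _ (hS n), ?_⟩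
  · rw [PMF.map_bind]
    simp only [PMF.pure_map]
  · rw [PMF.map_bind]

theorem lift_fun {X Y : Type} {S : X → PMF Y → Prop} (μ : PMF X) (f : X → PMF Y)
    (h : ∀ x ∈ μ.support, S x (f x)) : Lift S μ (μ.bind f) := by
  classical
  rw [lift_iff]
  obtain ⟨x₀, hx₀⟩ := μ.support_nonempty
  have : Nonempty μ.support := ⟨⟨x₀, hx₀⟩⟩
  have : Countable μ.support := μ.support_countable.to_subtype
  obtain ⟨g, hg⟩ := exists_surjective_nat μ.support
  let e : X → ℕ := fun x => if hx : x ∈ μ.support then Function.surjInv hg ⟨x, hx⟩ else 0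
  have he : ∀ x ∈ μ.support, (g (e x) : X) = x := by
    intro x hx
    simp only [e, dif_pos hx, Function.surjInv_eq]
  refine ⟨μ.map e, fun n => g n, fun n => f (g n), ?_, fun n => h _ (g n).2, ?_⟩
  · rw [PMF.bind_map]
    conv_lhs => rw [← PMF.bind_pure μ]
    refine bind_congr_support _ _ _ fun x hx => ?_
    simp only [Function.comp, he x hx]
  · rw [PMF.bind_map]
    refine bind_congr_support _ _ _ fun x hx => ?_
    simp only [Function.comp, he x hx]

theorem lift_refl {X : Type} {S : X → PMF X → Prop} (h : ∀ x, S x (PMF.pure x)) (μ : PMF X) :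
    Lift S μ μ := by
  have := lift_fun (S := S) μ PMF.pure (fun x _ => h x)
  rwa [PMF.bind_pure] at this

theorem lift_map_pure {X Y Z : Type} {S : Y → PMF Z → Prop} (f : X → Y) (g : X → Z)
    (h : ∀ x, S (f x) (PMF.pure (g x))) (μ : PMF X) : Lift S (μ.map f) (μ.map g) := by
  refine lift_map (S := fun x ν => ν = PMF.pure x) f g ?_
    (lift_refl (S := fun x ν => ν = PMF.pure x) (fun _ => rfl) μ)
  rintro x _ rfl
  rw [PMF.pure_map]
  exact h x

theorem lift_const {X Y : Type} {S : X → PMF Y → Prop} (μ : PMF X) (ν : PMF Y)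
    (h : ∀ x ∈ μ.support, S x ν) : Lift S μ ν := by
  have := lift_fun (S := S) μ (fun _ => ν) h
  rwa [PMF.bind_const] at this

theorem lift_pure {X Y : Type} {S : X → PMF Y → Prop} {x : X} {ν : PMF Y} (h : S x ν) :
    Lift S (PMF.pure x) ν := by
  refine lift_const _ _ fun y hy => ?_
  rw [PMF.support_pure, Set.mem_singleton_iff] at hy
  rwa [hy]

theorem step_inl {α σ τ' : Type} (P : PAut α σ) (Q : PAut α τ') (a : Option α) (x : σ)
    (μ : PMF σ) (h : step P a x μ) : step (pseq P Q) a (Sum.inl x) (μ.map Sum.inl) := by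
  rcases h with h | ⟨ha, rfl⟩
  · exact Or.inl (Or.inl ⟨μ, h, rfl⟩)
  · exact Or.inr ⟨ha, PMF.pure_map _ _⟩

theorem step_inr {α σ τ' : Type} (P : PAut α σ) (Q : PAut α τ') (a : Option α) (x : τ')
    (μ : PMF τ') (h : step Q a x μ) : step (pseq P Q) a (Sum.inr x) (μ.map Sum.inr) := by
  rcases h with h | ⟨ha, rfl⟩
  · exact Or.inl ⟨μ, h, rfl⟩
  · exact Or.inr ⟨ha, PMF.pure_map _ _⟩

theorem weakTau_map {α σ τ' : Type} {P : PAut α σ} {Q : PAut α τ'} (f : σ → τ')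
    (hf : ∀ a x μ, step P a x μ → step Q a (f x) (μ.map f)) {μ ν : PMF σ}
    (h : WeakTau P μ ν) : WeakTau Q (μ.map f) (ν.map f) :=
  Relation.ReflTransGen.lift (fun μ : PMF σ => μ.map f)
    (fun _ _ hl => lift_map f f (hf none) hl) _ _ h

theorem weakStep_map {α σ τ' : Type} {P : PAut α σ} {Q : PAut α τ'} (f : σ → τ')
    (hf : ∀ a x μ, step P a x μ → step Q a (f x) (μ.map f)) {a : Option α} {μ ν : PMF σ}
    (h : WeakStep P a μ ν) : WeakStep Q a (μ.map f) (ν.map f) := by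
  obtain ⟨μ₁, μ₂, h₁, h₂, h₃⟩ := h
  exact ⟨_, _, weakTau_map f hf h₁, lift_map f f (hf a) h₂, weakTau_map f hf h₃⟩

theorem weakStep_pure {α σ : Type} {P : PAut α σ} {a : Option α} {x : σ} {μ : PMF σ}
    (h : P.trans x a μ) : WeakStep P a (PMF.pure x) μ :=
  ⟨_, _, Relation.ReflTransGen.refl, lift_pure (Or.inl h), Relation.ReflTransGen.refl⟩

theorem seq_left {α σ₁ σ₂ σ₃ : Type}
    (P : PAut α σ₁) (Q : PAut α σ₂) (R : PAut α σ₃) (h : Sim P Q) :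
    Sim (pseq P R) (pseq Q R) := by
  obtain ⟨S, hS⟩ := h
  let S' : σ₁ ⊕ σ₃ → PMF (σ₂ ⊕ σ₃) → Prop := fun s ρ =>
    (∃ x ν, s = Sum.inl x ∧ S x ν ∧ ρ = ν.map Sum.inl) ∨
    (∃ y, s = Sum.inr y ∧ ρ = PMF.pure (Sum.inr y))
  have hl : ∀ x ν, S x ν → S' (Sum.inl x) (ν.map Sum.inl) :=
    fun x ν hx => Or.inl ⟨x, ν, rfl, hx, rfl⟩
  have hr : ∀ y, S' (Sum.inr y) (PMF.pure (Sum.inr y)) := fun y => Or.inr ⟨y, rfl, rfl⟩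
  refine ⟨S', ?_, ?_, ?_⟩
  · obtain ⟨ν₀, h₁, h₂⟩ := hS.init
    exact ⟨_, weakTau_map _ (step_inl Q R) h₁, lift_map _ _ hl h₂⟩
  · rintro s a μ' ht ρ (⟨x, ν, rfl, hx, rfl⟩ | ⟨y, rfl, rfl⟩)
    · rcases ht with ⟨μ, hμ, rfl⟩ | ⟨rfl, hfin, rfl⟩
      · obtain ⟨ν', h₁, h₂⟩ := hS.step _ _ _ hμ _ hx
        exact ⟨_, weakStep_map _ (step_inl Q R) h₁, lift_map _ _ hl h₂⟩
      · obtain ⟨ν', h₁, h₂⟩ := hS.final _ _ hfin hx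
        refine ⟨R.init.map Sum.inr, ⟨ν'.map Sum.inl, _, weakTau_map _ (step_inl Q R) h₁,
          lift_const _ _ ?_, Relation.ReflTransGen.refl⟩, lift_map_pure _ _ hr _⟩
        intro z hz
        rw [PMF.mem_support_map_iff] at hz
        obtain ⟨y, hy, rfl⟩ := hz
        exact Or.inl (Or.inr ⟨rfl, h₂ y hy, rfl⟩)
    · obtain ⟨μ, hμ, rfl⟩ := ht
      exact ⟨μ.map Sum.inr, weakStep_pure ⟨μ, hμ, rfl⟩, lift_map_pure _ _ hr _⟩
  · rintro s ρ ⟨z, hz, rfl⟩ (⟨x, ν, hx, -, -⟩ | ⟨y, hy, rfl⟩)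
    · cases hx
    · cases hy
      refine ⟨_, Relation.ReflTransGen.refl, fun w hw => ?_⟩
      rw [PMF.support_pure, Set.mem_singleton_iff] at hw
      exact ⟨z, hz, hw⟩

theorem seq_right {α σ₁ σ₂ σ₃ : Type}
    (P : PAut α σ₁) (Q : PAut α σ₂) (R : PAut α σ₃) (h : Sim P Q) :
    Sim (pseq R P) (pseq R Q) := by
  obtain ⟨S, hS⟩ := h
  let S' : σ₃ ⊕ σ₁ → PMF (σ₃ ⊕ σ₂) → Prop := fun s ρ =>
    (∃ x ν, s = Sum.inr x ∧ S x ν ∧ ρ = ν.map Sum.inr) ∨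
    (∃ y, s = Sum.inl y ∧ ρ = PMF.pure (Sum.inl y))
  have hr : ∀ x ν, S x ν → S' (Sum.inr x) (ν.map Sum.inr) :=
    fun x ν hx => Or.inl ⟨x, ν, rfl, hx, rfl⟩
  have hl : ∀ y, S' (Sum.inl y) (PMF.pure (Sum.inl y)) := fun y => Or.inr ⟨y, rfl, rfl⟩
  refine ⟨S', ?_, ?_, ?_⟩
  · exact ⟨_, Relation.ReflTransGen.refl, lift_map_pure _ _ hl _⟩
  · rintro s a μ' ht ρ (⟨x, ν, rfl, hx, rfl⟩ | ⟨y, rfl, rfl⟩)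
    · obtain ⟨μ, hμ, rfl⟩ := ht
      obtain ⟨ν', h₁, h₂⟩ := hS.step _ _ _ hμ _ hx
      exact ⟨_, weakStep_map _ (step_inr R Q) h₁, lift_map _ _ hr h₂⟩
    · rcases ht with ⟨μ, hμ, rfl⟩ | ⟨rfl, hfin, rfl⟩
      · exact ⟨μ.map Sum.inl, weakStep_pure (Or.inl ⟨μ, hμ, rfl⟩), lift_map_pure _ _ hl _⟩
      · obtain ⟨ν₀, h₁, h₂⟩ := hS.init
        exact ⟨ν₀.map Sum.inr, ⟨_, Q.init.map Sum.inr, Relation.ReflTransGen.refl,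
          lift_pure (Or.inl (Or.inr ⟨rfl, hfin, rfl⟩)), weakTau_map _ (step_inr R Q) h₁⟩,
          lift_map _ _ hr h₂⟩
  · rintro s ρ ⟨z, hz, rfl⟩ (⟨x, ν, hx, hν, rfl⟩ | ⟨y, hy, -⟩)
    · cases hx
      obtain ⟨ν', h₁, h₂⟩ := hS.final _ _ hz hν
      refine ⟨_, weakTau_map _ (step_inr R Q) h₁, fun w hw => ?_⟩
      rw [PMF.mem_support_map_iff] at hw
      obtain ⟨y, hy, rfl⟩ := hw
      exact ⟨y, h₂ y hy, rfl⟩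
    · cases hy

/-- simulation is a precongruence for sequential composition:
if `P ≤ Q` then `P · R ≤ Q · R` and `R · P ≤ R · Q`. -/
theorem sim_precongruence_seq {α σ₁ σ₂ σ₃ : Type}
    (P : PAut α σ₁) (Q : PAut α σ₂) (R : PAut α σ₃) (h : Sim P Q) :
    Sim (pseq P R) (pseq Q R) ∧ Sim (pseq R P) (pseq R Q) := by
  exact ⟨seq_left P Q R h, seq_right P Q R h⟩

end PCKA
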